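/- For every m ≥ 1, σ_m(x) = q_m·x + (1 − q_m)·Σ_{k=1}^{m−1} (−1)^{ρ_k} i_k/(q_1 ⋯ q_k) − (−1)^{ρ_m} i_m/(q_1 q_2 ⋯ q_{m−1}). -/

import Mathlib

/-- `q_1 q_2 ⋯ q_n` (1-based indexing; `prodQ q 0 = 1`). -/
noncomputable def prodQ (q : ℕ → ℕ) (n : ℕ) : ℝ :=
  ∏ j ∈ Finset.Icc 1 n, (q j : ℝ)

/-- The positive Cantor series value `x = Σ_{n=1}^∞ i_n/(q_1 ⋯ q_n)`. -/
noncomputable def cantorVal (q i : ℕ → ℕ) : ℝ :=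
  ∑' n : ℕ, (i (n + 1) : ℝ) / prodQ q (n + 1)

/-- The generalized shift operator
`σ_m = Σ_{k=1}^{m-1} i_k/(q_1⋯q_k) + Σ_{l=m+1}^∞ i_l/(q_1⋯q_{m-1} q_{m+1}⋯q_l)`. -/
noncomputable def sigmaC (q i : ℕ → ℕ) (m : ℕ) : ℝ :=
  (∑ k ∈ Finset.Icc 1 (m - 1), (i k : ℝ) / prodQ q k) +
    ∑' t : ℕ, (i (m + 1 + t) : ℝ) /
      (prodQ q (m - 1) * ∏ j ∈ Finset.Icc (m + 1) (m + 1 + t), (q j : ℝ))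

/-- The `m`-fold shift `σ^m(x) = Σ_{k=m+1}^∞ i_k/(q_{m+1} ⋯ q_k)`. -/
noncomputable def shiftVal (q i : ℕ → ℕ) (m : ℕ) : ℝ :=
  ∑' t : ℕ, (i (m + 1 + t) : ℝ) / ∏ j ∈ Finset.Icc (m + 1) (m + 1 + t), (q j : ℝ)

-- `(-1)^{ρ_n}` where `ρ_n = 1` if `n ∈ N_B` and `ρ_n = 2` otherwise.
open Classical in
noncomputable def sgn (NB : Set ℕ) (n : ℕ) : ℝ := if n ∈ NB then -1 else 1

/-- The sign-variable Cantor series value `x = Σ_{n=1}^∞ (-1)^{ρ_n} i_n/(q_1 ⋯ q_n)`. -/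
noncomputable def svCantorVal (NB : Set ℕ) (q i : ℕ → ℕ) : ℝ :=
  ∑' n : ℕ, sgn NB (n + 1) * (i (n + 1) : ℝ) / prodQ q (n + 1)

/-- The generalized shift operator for sign-variable Cantor series:
`σ_m = Σ_{k=1}^{m-1} (-1)^{ρ_k} i_k/(q_1⋯q_k)
      + Σ_{l=m+1}^∞ (-1)^{ρ_l} i_l/(q_1⋯q_{m-1} q_{m+1}⋯q_l)`. -/
noncomputable def svSigma (NB : Set ℕ) (q i : ℕ → ℕ) (m : ℕ) : ℝ :=
  (∑ k ∈ Finset.Icc 1 (m - 1), sgn NB k * (i k : ℝ) / prodQ q k) +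
    ∑' t : ℕ, sgn NB (m + 1 + t) * (i (m + 1 + t) : ℝ) /
      (prodQ q (m - 1) * ∏ j ∈ Finset.Icc (m + 1) (m + 1 + t), (q j : ℝ))

theorem prodQ_succ (q : ℕ → ℕ) (n : ℕ) : prodQ q (n + 1) = prodQ q n * (q (n + 1) : ℝ) := by
  unfold prodQ
  rw [Finset.prod_Icc_succ_top (by omega)]

theorem prodQ_ge (q : ℕ → ℕ) (hq : ∀ n, 1 ≤ n → 2 ≤ q n) (n : ℕ) : (2 : ℝ) ^ n ≤ prodQ q n := by
  induction n with
  | zero => simp [prodQ]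
  | succ n ih =>
    rw [prodQ_succ, pow_succ]
    have h : (2 : ℝ) ≤ q (n + 1) := by exact_mod_cast hq (n + 1) (by omega)
    exact mul_le_mul ih h (by norm_num) (le_trans (by positivity) ih)

theorem abs_sgn_eq (NB : Set ℕ) (n : ℕ) : |sgn NB n| = 1 := by
  unfold sgn
  split_ifs <;> simp

theorem sv_summable (NB : Set ℕ) (q i : ℕ → ℕ) (hq : ∀ n, 1 ≤ n → 2 ≤ q n)
    (hi : ∀ n, 1 ≤ n → i n ≤ q n - 1) :
    Summable (fun n : ℕ => sgn NB (n + 1) * (i (n + 1) : ℝ) / prodQ q (n + 1)) := by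
  refine Summable.of_norm_bounded summable_geometric_two (fun n => ?_)
  have hP := prodQ_ge q hq n
  have h2 : (0 : ℝ) < 2 ^ n := by positivity
  have hP0 : 0 < prodQ q n := lt_of_lt_of_le h2 hP
  have hqn : (2 : ℝ) ≤ q (n + 1) := by exact_mod_cast hq (n + 1) (by omega)
  have hin : (i (n + 1) : ℝ) ≤ q (n + 1) := by
    have := hi (n + 1) (by omega)
    exact_mod_cast (by omega : i (n + 1) ≤ q (n + 1))
  have hq0 : (0 : ℝ) < q (n + 1) := by linarith
  rw [Real.norm_eq_abs, abs_div, abs_mul, abs_sgn_eq, one_mul, Nat.abs_cast, prodQ_succ,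
    abs_of_pos (mul_pos hP0 hq0)]
  calc (i (n + 1) : ℝ) / (prodQ q n * q (n + 1)) ≤ q (n + 1) / (prodQ q n * q (n + 1)) := by
        gcongr
    _ = 1 / prodQ q n := by field_simp
    _ ≤ 1 / 2 ^ n := by gcongr
    _ = (1 / 2) ^ n := by rw [one_div_pow]

theorem prodQ_split (q : ℕ → ℕ) (m t : ℕ) :
    prodQ q (m + 1 + t) = prodQ q m * ∏ j ∈ Finset.Icc (m + 1) (m + 1 + t), (q j : ℝ) := by
  induction t with
  | zero => simp [prodQ_succ]
  | succ t ih =>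
    rw [← add_assoc, prodQ_succ, ih, Finset.prod_Icc_succ_top (by omega), mul_assoc]

theorem sum_Icc_shift (f : ℕ → ℝ) (p : ℕ) :
    ∑ k ∈ Finset.Icc 1 p, f k = ∑ k ∈ Finset.range p, f (k + 1) := by
  induction p with
  | zero => simp
  | succ p ih => rw [Finset.sum_Icc_succ_top (by omega), ih, Finset.sum_range_succ]

theorem stmt_13 (NB : Set ℕ) (q i : ℕ → ℕ) (hq : ∀ n, 1 ≤ n → 2 ≤ q n)
    (hi : ∀ n, 1 ≤ n → i n ≤ q n - 1) (m : ℕ) (hm : 1 ≤ m) :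
    svSigma NB q i m =
      (q m : ℝ) * svCantorVal NB q i +
        (1 - (q m : ℝ)) * (∑ k ∈ Finset.Icc 1 (m - 1), sgn NB k * (i k : ℝ) / prodQ q k) -
        sgn NB m * (i m : ℝ) / prodQ q (m - 1) := by
  obtain ⟨p, rfl⟩ : ∃ p, m = p + 1 := ⟨m - 1, by omega⟩
  have hpos : ∀ n, 0 < prodQ q n := fun n =>
    lt_of_lt_of_le (by positivity) (prodQ_ge q hq n)
  have hq0 : (q (p + 1) : ℝ) ≠ 0 := by
    have := hq (p + 1) hm
    exact_mod_cast (by omega : q (p + 1) ≠ 0)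
  have hP0 := (hpos p).ne'
  have hs := (sv_summable NB q i hq hi).sum_add_tsum_nat_add (p + 1)
  have htail : ∑' t : ℕ, sgn NB (p + 1 + 1 + t) * (i (p + 1 + 1 + t) : ℝ) /
      (prodQ q p * ∏ j ∈ Finset.Icc (p + 1 + 1) (p + 1 + 1 + t), (q j : ℝ)) =
      (q (p + 1) : ℝ) * ∑' t : ℕ, sgn NB (t + (p + 1) + 1) * (i (t + (p + 1) + 1) : ℝ) /
        prodQ q (t + (p + 1) + 1) := by
    rw [← tsum_mul_left]
    refine tsum_congr (fun t => ?_)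
    have e : t + (p + 1) + 1 = p + 1 + 1 + t := by omega
    have h0 := (hpos (p + 1 + 1 + t)).ne'
    rw [e]
    rw [prodQ_split q (p + 1) t, prodQ_succ] at h0 ⊢
    have h1 := right_ne_zero_of_mul h0
    field_simp
  unfold svSigma svCantorVal
  rw [← hs, Nat.add_sub_cancel, htail, sum_Icc_shift, Finset.sum_range_succ]
  have h3 : sgn NB (p + 1) * (i (p + 1) : ℝ) / prodQ q p =
      q (p + 1) * (sgn NB (p + 1) * (i (p + 1) : ℝ) / prodQ q (p + 1)) := by
    rw [prodQ_succ]
    field_simp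
  rw [h3]
  ring
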